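/- Let n, r ≥ 1 and let K be a field. Suppose the minimal Hilbert series is finite, i.e., there exists a degree D with b_D = 0. Then there exists a nonzero polynomial P in the r·n·n coefficient variables with coefficients in K such that every coefficient vector α ∈ K^{r·n·n} with P(α) ≠ 0 satisfies dim_K A(α)_d = b_d for all d ≥ 0. (In particular, the minimal Hilbert series is attained in general position in the Zariski sense.) -/

import Mathlib

/-!
For words `u`, `v` the products `u * p_i(α) * v` of degree `d` span the degree-`d` part of the ideal
`I(α)` because the relations are homogeneous (`ker_degMap`), and their coordinates in the basis of
words are polynomials in `α` (`relCoord`). So `dim A(α)_d` is the number of words of length `d`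
minus the rank of a family of vectors with polynomial coordinates (`quadDim_add`), and by
semicontinuity of the rank (`exists_poly_finrank_span_le`) it takes its minimal value wherever a
suitable determinant `P_d`, nonzero at a minimizing `α₀`, does not vanish. This holds over every
field, as `P_d` has a nonzero value and hence is a nonzero polynomial.

If `b_D = 0`, the product of the `P_d` with `d ≤ D` works in all degrees: where it does not vanish,
`A(α)_D = 0`, hence `A(α)_d = 0` and `b_d = 0` for all `d ≥ D`.
-/

noncomputable section

/-- The degree-`d` monomial of the free algebra `K⟨x_1,…,x_n⟩` determined by the word
`w : Fin d → Fin n` (the ordered product `x_{w 0} ⋯ x_{w (d-1)}`). -/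
def quadMonomial (K : Type) [Field K] {n d : ℕ} (w : Fin d → Fin n) :
    FreeAlgebra K (Fin n) :=
  ((List.ofFn w).map (FreeAlgebra.ι K)).prod

/-- The relation whose `RingQuot` is the quotient of `K⟨x_1,…,x_n⟩` by the two-sided ideal
generated by the quadratic polynomials `p_i(α) = Σ_{k,j} α_i^{k,j} x_k x_j`, `1 ≤ i ≤ r`. -/
def quadRel (K : Type) [Field K] (n r : ℕ) (α : Fin r → Fin n → Fin n → K) :
    FreeAlgebra K (Fin n) → FreeAlgebra K (Fin n) → Prop := fun a b =>
  (∃ i : Fin r, a = ∑ k : Fin n, ∑ j : Fin n,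
      α i k j • (FreeAlgebra.ι K k * FreeAlgebra.ι K j)) ∧ b = 0

/-- `dim_K A(α)_d`: the dimension of the `d`-th homogeneous component of the quadratic
algebra `A(α)`, i.e. of the image in `A(α)` of the span of the degree-`d` monomials. -/
def quadDim (K : Type) [Field K] (n r : ℕ) (α : Fin r → Fin n → Fin n → K) (d : ℕ) : ℕ :=
  Module.finrank K (Submodule.span K
    {y : RingQuot (quadRel K n r α) |
      ∃ w : Fin d → Fin n, y = RingQuot.mkAlgHom K (quadRel K n r α) (quadMonomial K w)})

/-- `b_d = min_{α} dim_K A(α)_d`. -/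
def quadMin (K : Type) [Field K] (n r : ℕ) (d : ℕ) : ℕ :=
  sInf (Set.range fun α : Fin r → Fin n → Fin n → K => quadDim K n r α d)


/-! ### Semicontinuity of the rank -/

/-- Lower semicontinuity of the rank: for a family of vectors with polynomial coordinates, the
dimension of the span at `a` is at least that at `a₀` on the nonvanishing locus of a polynomial
`P` with `P(a₀) ≠ 0`. A linear map `L` sending a basis of the span at `a₀` to the standard basis
turns the corresponding vectors into a square polynomial matrix, and `P` is its determinant. -/
lemma exists_poly_finrank_span_le {K W T σ : Type} [Field K] [Fintype W]
    (g : T → W → MvPolynomial σ K) (a₀ : σ → K) :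
    ∃ P : MvPolynomial σ K, MvPolynomial.eval a₀ P ≠ 0 ∧
      ∀ a : σ → K, MvPolynomial.eval a P ≠ 0 →
        Module.finrank K (Submodule.span K
          (Set.range fun t => fun w => MvPolynomial.eval a₀ (g t w))) ≤
        Module.finrank K (Submodule.span K
          (Set.range fun t => fun w => MvPolynomial.eval a (g t w))) := by
  classical
  obtain ⟨f, hf, -, hli⟩ := Submodule.exists_fun_fin_finrank_span_eq K
    (Set.range fun t => fun w => MvPolynomial.eval a₀ (g t w))
  generalize Module.finrank K (Submodule.span K
    (Set.range fun t => fun w => MvPolynomial.eval a₀ (g t w))) = m at f hf hli ⊢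
  choose s hs using hf
  obtain ⟨L, hL⟩ : ∃ L : (W → K) →ₗ[K] (Fin m → K), ∀ i, L (f i) = Pi.single i 1 := by
    have hker : LinearMap.ker (Fintype.linearCombination K f) = ⊥ :=
      LinearMap.ker_eq_bot.2 (LinearIndependent.fintypeLinearCombination_injective hli)
    obtain ⟨L, hL⟩ := LinearMap.exists_leftInverse_of_injective _ hker
    refine ⟨L, fun i => ?_⟩
    have := LinearMap.congr_fun hL (Pi.single i 1)
    simpa [Fintype.linearCombination_apply_single] using this
  let M : Matrix (Fin m) (Fin m) (MvPolynomial σ K) := fun i k =>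
    ∑ w, g (s i) w * MvPolynomial.C (L (Pi.single w 1) k)
  have hM : ∀ a, (MvPolynomial.eval a).mapMatrix M =
      fun i => L (fun w => MvPolynomial.eval a (g (s i) w)) := by
    intro a
    funext i k
    conv_rhs => rw [pi_eq_sum_univ' (fun w => MvPolynomial.eval a (g (s i) w))]
    change MvPolynomial.eval a (∑ w, g (s i) w * MvPolynomial.C (L (Pi.single w 1) k)) = _
    simp [map_sum, Finset.sum_apply]
  refine ⟨M.det, ?_, fun a ha => ?_⟩
  · rw [RingHom.map_det, hM]
    have : (fun i => L (fun w => MvPolynomial.eval a₀ (g (s i) w))) =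
        (1 : Matrix (Fin m) (Fin m) K) := by
      funext i
      have h := hL i
      rw [← hs i] at h
      rw [h]
      funext k
      simp [Matrix.one_apply, Pi.single_apply, eq_comm]
    rw [this]
    simp
  · rw [RingHom.map_det, hM] at ha
    have hli' : LinearIndependent K fun i => fun w => MvPolynomial.eval a (g (s i) w) :=
      LinearIndependent.of_comp L
        (Matrix.linearIndependent_rows_of_det_ne_zero ha)
    have h1 := finrank_span_eq_card hli'
    rw [Fintype.card_fin] at h1
    rw [← h1]
    apply Submodule.finrank_mono
    apply Submodule.span_mono
    rintro _ ⟨i, rfl⟩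
    exact ⟨s i, rfl⟩

/-! ### Words and coefficients in the free algebra -/

section

variable (K : Type) [Field K] {n : ℕ}

/-- The monomial of the free algebra spelled by a list of letters. -/
def wordMon (l : List (Fin n)) : FreeAlgebra K (Fin n) := (l.map (FreeAlgebra.ι K)).prod

lemma wordMon_append (l l' : List (Fin n)) :
    wordMon K (l ++ l') = wordMon K l * wordMon K l' := by
  simp [wordMon]

lemma basisFreeMonoid_apply (l : FreeMonoid (Fin n)) :
    FreeAlgebra.basisFreeMonoid K (Fin n) l = wordMon K l.toList := by
  simp [FreeAlgebra.basisFreeMonoid, wordMon, FreeAlgebra.equivMonoidAlgebraFreeMonoid,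
    FreeMonoid.lift_apply]

lemma span_wordMon : Submodule.span K (Set.range (wordMon K (n := n))) = ⊤ := by
  rw [← (FreeAlgebra.basisFreeMonoid K (Fin n)).span_eq]
  congr 1
  ext x
  constructor
  · rintro ⟨l, rfl⟩
    exact ⟨FreeMonoid.ofList l, by simp [basisFreeMonoid_apply]⟩
  · rintro ⟨l, rfl⟩
    exact ⟨l.toList, by simp [basisFreeMonoid_apply]⟩

/-- The coefficients of an element of the free algebra at the words of length `d`. -/
def degCoeff (n d : ℕ) : FreeAlgebra K (Fin n) →ₗ[K] ((Fin d → Fin n) → K) :=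
  LinearMap.pi fun w =>
    (FreeAlgebra.basisFreeMonoid K (Fin n)).coord (FreeMonoid.ofList (List.ofFn w))

lemma degCoeff_wordMon {d : ℕ} (l : List (Fin n)) (w : Fin d → Fin n) :
    degCoeff K n d (wordMon K l) w = if List.ofFn w = l then 1 else 0 := by
  have : wordMon K l = FreeAlgebra.basisFreeMonoid K (Fin n) (FreeMonoid.ofList l) := by
    simp [basisFreeMonoid_apply]
  rw [this]
  simp only [degCoeff, LinearMap.pi_apply, Module.Basis.coord_apply, Module.Basis.repr_self]
  classical
  rw [Finsupp.single_apply]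
  simp only [EmbeddingLike.apply_eq_iff_eq, eq_comm]

/-- The homogeneous element of degree `d` with prescribed coefficients. -/
def degElem (n d : ℕ) : ((Fin d → Fin n) → K) →ₗ[K] FreeAlgebra K (Fin n) :=
  Fintype.linearCombination K (quadMonomial K)

lemma degElem_degCoeff_wordMon (d : ℕ) (l : List (Fin n)) :
    degElem K n d (degCoeff K n d (wordMon K l)) = if l.length = d then wordMon K l else 0 := by
  rw [degElem, Fintype.linearCombination_apply]
  simp only [degCoeff_wordMon]
  split_ifs with h
  · subst h
    rw [Finset.sum_eq_single l.get]
    · simp [quadMonomial, wordMon]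
    · intro w _ hw
      rw [if_neg, zero_smul]
      intro h
      apply hw
      apply List.ofFn_injective
      rw [h, List.ofFn_get]
    · simp
  · refine Finset.sum_eq_zero fun w _ => ?_
    rw [if_neg, zero_smul]
    rintro rfl
    simp at h

lemma degCoeff_degElem (d : ℕ) (f : (Fin d → Fin n) → K) :
    degCoeff K n d (degElem K n d f) = f := by
  funext w
  have h : ∀ w', quadMonomial K w' = wordMon K (List.ofFn (w' : Fin d → Fin n)) := fun _ => rfl
  simp [degElem, Fintype.linearCombination_apply, h, degCoeff_wordMon,
    List.ofFn_injective.eq_iff]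

/-! ### The relations in degree `d` -/

variable {r : ℕ} (α : Fin r → Fin n → Fin n → K)

/-- The quadratic polynomial `p_i(α)`. -/
def quadPoly (i : Fin r) : FreeAlgebra K (Fin n) :=
  ∑ k : Fin n, ∑ j : Fin n, α i k j • (FreeAlgebra.ι K k * FreeAlgebra.ι K j)

lemma word_quadPoly_word (u v : List (Fin n)) (i : Fin r) :
    wordMon K u * quadPoly K α i * wordMon K v =
      ∑ k : Fin n, ∑ j : Fin n, α i k j • wordMon K (u ++ [k, j] ++ v) := by
  simp [quadPoly, Finset.mul_sum, Finset.sum_mul, wordMon, mul_assoc]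

lemma mk_quadPoly (i : Fin r) :
    RingQuot.mkAlgHom K (quadRel K n r α) (quadPoly K α i) = 0 := by
  rw [← map_zero (RingQuot.mkAlgHom K (quadRel K n r α))]
  exact RingQuot.mkAlgHom_rel K ⟨⟨i, rfl⟩, rfl⟩

/-- The two-sided ideal generated by the `p_i(α)`, as a left ideal: the linear span of all
products `a * p_i(α) * b`. -/
def quadIdeal : Ideal (FreeAlgebra K (Fin n)) where
  __ := (Submodule.span K {x | ∃ a b i, x = a * quadPoly K α i * b}).toAddSubmonoid
  smul_mem' c x hx := by
    change x ∈ Submodule.span K {x | ∃ a b i, x = a * quadPoly K α i * b} at hx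
    change c * x ∈ Submodule.span K {x | ∃ a b i, x = a * quadPoly K α i * b}
    induction hx using Submodule.span_induction with
    | mem x h =>
      obtain ⟨a, b, i, rfl⟩ := h
      exact Submodule.subset_span ⟨c * a, b, i, by simp [mul_assoc]⟩
    | zero => simp
    | add x y _ _ hx hy => rw [mul_add]; exact add_mem hx hy
    | smul t x _ hx => rw [mul_smul_comm]; exact Submodule.smul_mem _ _ hx

lemma mem_quadIdeal {x : FreeAlgebra K (Fin n)} :
    x ∈ quadIdeal K α ↔ x ∈ Submodule.span K {x | ∃ a b i, x = a * quadPoly K α i * b} :=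
  Iff.rfl

instance : (quadIdeal K α).IsTwoSided where
  mul_mem_of_left {x} c hx := by
    rw [mem_quadIdeal] at hx ⊢
    induction hx using Submodule.span_induction with
    | mem x h =>
      obtain ⟨a, b, i, rfl⟩ := h
      exact Submodule.subset_span ⟨a, b * c, i, by simp [mul_assoc]⟩
    | zero => simp
    | add x y _ _ hx hy => rw [add_mul]; exact add_mem hx hy
    | smul t x _ hx => rw [smul_mul_assoc]; exact Submodule.smul_mem _ _ hx

lemma mem_quadIdeal_of_mk_eq_zero {x : FreeAlgebra K (Fin n)}
    (hx : RingQuot.mkAlgHom K (quadRel K n r α) x = 0) : x ∈ quadIdeal K α := by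
  have hrel : ∀ ⦃x y⦄, quadRel K n r α x y →
      Ideal.Quotient.mk (quadIdeal K α) x = Ideal.Quotient.mk (quadIdeal K α) y := by
    rintro _ _ ⟨⟨i, rfl⟩, rfl⟩
    rw [map_zero, Ideal.Quotient.eq_zero_iff_mem, mem_quadIdeal]
    exact Submodule.subset_span ⟨1, 1, i, by simp [quadPoly]⟩
  have h := RingQuot.lift_mkRingHom_apply (Ideal.Quotient.mk (quadIdeal K α)) hrel x
  rw [← RingQuot.mkAlgHom_coe K] at h
  rw [← Ideal.Quotient.eq_zero_iff_mem, ← h]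
  exact (congrArg _ hx).trans (map_zero _)

/-- The coordinates, as polynomials in the coefficients `α`, of the degree-`d` part of
`u * p_i(α) * v` for words `u` and `v`; it vanishes unless `u` and `v` have total length `d - 2`. -/
def relCoord (n r d : ℕ) (t : List (Fin n) × Fin r × List (Fin n)) (w : Fin d → Fin n) :
    MvPolynomial (Fin r × Fin n × Fin n) K :=
  ∑ k : Fin n, ∑ j : Fin n,
    if List.ofFn w = t.1 ++ [k, j] ++ t.2.2 then MvPolynomial.X (t.2.1, k, j) else 0

lemma eval_relCoord (d : ℕ) (t : List (Fin n) × Fin r × List (Fin n)) :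
    (fun w => MvPolynomial.eval (fun v => α v.1 v.2.1 v.2.2) (relCoord K n r d t w)) =
      degCoeff K n d (wordMon K t.1 * quadPoly K α t.2.1 * wordMon K t.2.2) := by
  funext w
  rw [word_quadPoly_word]
  simp only [relCoord, map_sum, map_smul, Finset.sum_apply, Pi.smul_apply, degCoeff_wordMon]
  refine Finset.sum_congr rfl fun k _ => Finset.sum_congr rfl fun j _ => ?_
  split_ifs <;> simp

/-- The span of the vectors `relCoord` at `α`; it is the degree-`d` part of the ideal `I(α)`. -/
def relSpan (d : ℕ) : Submodule K ((Fin d → Fin n) → K) :=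
  Submodule.span K (Set.range fun t => fun w =>
    MvPolynomial.eval (fun v => α v.1 v.2.1 v.2.2) (relCoord K n r d t w))

/-- The map from coefficient vectors in degree `d` to the quadratic algebra `A(α)`. -/
def degMap (d : ℕ) : ((Fin d → Fin n) → K) →ₗ[K] RingQuot (quadRel K n r α) :=
  (RingQuot.mkAlgHom K (quadRel K n r α)).toLinearMap ∘ₗ degElem K n d

/-- Since the relations are homogeneous, the kernel of `degMap` is spanned by the degree-`d`
products `u * p_i(α) * v`. -/
lemma ker_degMap (d : ℕ) : LinearMap.ker (degMap K α d) = relSpan K α d := by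
  apply le_antisymm
  · intro f hf
    have h1 : degElem K n d f ∈ quadIdeal K α := mem_quadIdeal_of_mk_eq_zero K α hf
    rw [mem_quadIdeal] at h1
    rw [← degCoeff_degElem K d f]
    refine (Submodule.span_le (p := (relSpan K α d).comap (degCoeff K n d))).2 ?_ h1
    rintro _ ⟨a, b, i, rfl⟩
    have ha : a ∈ Submodule.span K (Set.range (wordMon K (n := n))) := by
      rw [span_wordMon]; trivial
    have hb : b ∈ Submodule.span K (Set.range (wordMon K (n := n))) := by
      rw [span_wordMon]; trivial
    change degCoeff K n d (a * quadPoly K α i * b) ∈ relSpan K α d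
    induction ha using Submodule.span_induction with
    | zero => simp
    | add x y _ _ hx hy => rw [add_mul, add_mul, map_add]; exact add_mem hx hy
    | smul t x _ hx =>
      rw [smul_mul_assoc, smul_mul_assoc, map_smul]; exact Submodule.smul_mem _ _ hx
    | mem x h =>
      obtain ⟨u, rfl⟩ := h
      induction hb using Submodule.span_induction with
      | zero => simp
      | add x y _ _ hx hy => rw [mul_add, map_add]; exact add_mem hx hy
      | smul t x _ hx => rw [mul_smul_comm, map_smul]; exact Submodule.smul_mem _ _ hx
      | mem x h =>
        obtain ⟨v, rfl⟩ := h
        exact Submodule.subset_span ⟨(u, i, v), eval_relCoord K α d (u, i, v)⟩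
  · refine Submodule.span_le.2 ?_
    rintro _ ⟨⟨u, i, v⟩, rfl⟩
    change degMap K α d (fun w =>
      MvPolynomial.eval (fun v => α v.1 v.2.1 v.2.2) (relCoord K n r d (u, i, v) w)) = 0
    rw [eval_relCoord]
    have h : degElem K n d (degCoeff K n d (wordMon K u * quadPoly K α i * wordMon K v)) =
        if u.length + 2 + v.length = d then wordMon K u * quadPoly K α i * wordMon K v else 0 := by
      rw [word_quadPoly_word]
      simp only [map_sum, map_smul, degElem_degCoeff_wordMon]
      have hlen : ∀ k j : Fin n, (u ++ [k, j] ++ v).length = u.length + 2 + v.length := by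
        intro k j
        simp
        omega
      simp only [hlen]
      split_ifs <;> simp
    simp only [degMap, LinearMap.comp_apply, h]
    split_ifs <;> simp [mk_quadPoly]

lemma range_degMap (d : ℕ) : LinearMap.range (degMap K α d) = Submodule.span K
    {y : RingQuot (quadRel K n r α) |
      ∃ w : Fin d → Fin n, y = RingQuot.mkAlgHom K (quadRel K n r α) (quadMonomial K w)} := by
  rw [degMap, LinearMap.range_comp, degElem, Fintype.range_linearCombination, Submodule.map_span]
  congr 1
  ext y
  simp [eq_comm]

lemma quadDim_add (d : ℕ) :
    quadDim K n r α d + Module.finrank K (relSpan K α d) = Fintype.card (Fin d → Fin n) := by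
  rw [quadDim, ← range_degMap, ← ker_degMap, LinearMap.finrank_range_add_finrank_ker,
    Module.finrank_fintype_fun_eq_card]

lemma quadDim_eq_zero_iff (d : ℕ) : quadDim K n r α d = 0 ↔
    ∀ w : Fin d → Fin n, RingQuot.mkAlgHom K (quadRel K n r α) (quadMonomial K w) = 0 := by
  have : Module.Finite K (Submodule.span K {y : RingQuot (quadRel K n r α) |
      ∃ w : Fin d → Fin n, y = RingQuot.mkAlgHom K (quadRel K n r α) (quadMonomial K w)}) := by
    rw [← range_degMap]
    infer_instance
  rw [quadDim, Submodule.finrank_eq_zero, Submodule.span_eq_bot]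
  constructor
  · exact fun h w => h _ ⟨w, rfl⟩
  · rintro h _ ⟨w, rfl⟩
    exact h w

/-- Once a homogeneous component of `A(α)` vanishes, so do all later ones. -/
lemma quadDim_eq_zero_of_le {D d : ℕ} (hD : quadDim K n r α D = 0) (h : D ≤ d) :
    quadDim K n r α d = 0 := by
  obtain ⟨e, rfl⟩ := Nat.exists_eq_add_of_le h
  rw [quadDim_eq_zero_iff] at hD ⊢
  intro w
  have hw : quadMonomial K w = quadMonomial K (fun i => w (Fin.castAdd e i)) *
      quadMonomial K (fun i => w (Fin.natAdd D i)) := by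
    rw [quadMonomial, ← Fin.append_castAdd_natAdd (f := w), List.ofFn_fin_append]
    simp [quadMonomial]
  rw [hw, map_mul, hD, zero_mul]

end

lemma quadMin_le (K : Type) [Field K] {n r : ℕ} (α : Fin r → Fin n → Fin n → K) (d : ℕ) :
    quadMin K n r d ≤ quadDim K n r α d :=
  Nat.sInf_le ⟨α, rfl⟩

/-- In a single degree the minimal dimension is attained on a nonempty principal open set. -/
lemma exists_poly_quadDim_eq (K : Type) [Field K] (n r d : ℕ) :
    ∃ P : MvPolynomial (Fin r × Fin n × Fin n) K, P ≠ 0 ∧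
      ∀ α : Fin r → Fin n → Fin n → K,
        MvPolynomial.eval (fun v => α v.1 v.2.1 v.2.2) P ≠ 0 →
          quadDim K n r α d = quadMin K n r d := by
  obtain ⟨α₀, hα₀⟩ : quadMin K n r d ∈
      Set.range fun α : Fin r → Fin n → Fin n → K => quadDim K n r α d :=
    Nat.sInf_mem (Set.range_nonempty _)
  obtain ⟨P, hP, hle⟩ := exists_poly_finrank_span_le (relCoord K n r d)
    (fun v => α₀ v.1 v.2.1 v.2.2)
  refine ⟨P, fun h => hP (by simp [h]), fun α hα => le_antisymm ?_ (quadMin_le K α d)⟩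
  have h1 : Module.finrank K (relSpan K α₀ d) ≤ Module.finrank K (relSpan K α d) := hle _ hα
  have h2 := quadDim_add K α₀ d
  have h3 := quadDim_add K α d
  simp only at hα₀
  omega

/-- over an arbitrary field `K`, if the minimal Hilbert series is finite
(some `b_D = 0`), then there is a nonzero polynomial `P` in the `r·n·n` coefficient
variables such that every `α` with `P(α) ≠ 0` satisfies `dim_K A(α)_d = b_d` for all `d`. -/
theorem stmt2 (K : Type) [Field K] (n r : ℕ) (hn : 1 ≤ n) (hr : 1 ≤ r)
    (hfin : ∃ D : ℕ, quadMin K n r D = 0) :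
    ∃ P : MvPolynomial (Fin r × Fin n × Fin n) K, P ≠ 0 ∧
      ∀ α : Fin r → Fin n → Fin n → K,
        MvPolynomial.eval (fun v => α v.1 v.2.1 v.2.2) P ≠ 0 →
          ∀ d : ℕ, quadDim K n r α d = quadMin K n r d := by
  obtain ⟨D, hD⟩ := hfin
  choose P hP0 hP using exists_poly_quadDim_eq K n r
  refine ⟨∏ d ∈ Finset.range (D + 1), P d, Finset.prod_ne_zero_iff.2 fun d _ => hP0 d,
    fun α hα d => ?_⟩
  rw [map_prod, Finset.prod_ne_zero_iff] at hα
  rcases Nat.lt_or_ge d (D + 1) with hd | hd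
  · exact hP d α (hα d (Finset.mem_range.2 hd))
  · have hDα : quadDim K n r α D = 0 :=
      (hP D α (hα D (Finset.self_mem_range_succ D))).trans hD
    have hdα := quadDim_eq_zero_of_le K α hDα (Nat.le_of_succ_le hd)
    have hle := quadMin_le K α d
    omega
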